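/- Let f(t) = 1/(ln(9)·(E−t)) for t ∈ [A, A₂] and f(t) = 0 otherwise. Then f is a probability density on [A,B] (f ≥ 0 and ∫_A^{A₂} f(t) dt = 1), and the measure μ_f with density f satisfies: for every x ∈ [A,B], ∫ g(x,y) dμ_f(y) ≤ 1/2 with equality for x ∈ [A, A₂], and for every y ∈ [A,B], ∫ g(x,y) dμ_f(x) ≥ 1/2 with equality for y ∈ [A, A₂]. Consequently (μ_f, μ_f) is a symmetric mixed-strategy Nash equilibrium of the two-player Moroccan procurement game with value G(μ_f, μ_f) = 1/2. -/

import Mathlib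

/-!
In the coordinates `a = E - x`, `b = E - y`, the bid `x` beats a bid `y < E` exactly when
`0 < a` and either `a < b ≤ 3 * a` or `b < a / 3`. The measure `logMeas A E` is, in the coordinate
`b`, the scale-invariant measure `db / b` on `[L / 9, L]` with `L = E - A`, normalised by `log 9`,
so an interval `(E - b₁, E - b₂]` has mass `log (b₁ / b₂) / log 9` (`logMeas_real_Ioc`).

* If `L / 9 ≤ a ≤ L / 3`, only `(a, 3 * a]` meets the support, with mass `log 3 / log 9 = 1 / 2`.
* If `L / 3 ≤ a ≤ L`, the winning set is `(a, L] ∪ [L / 9, a / 3)`, again with mass `1 / 2`.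
* If `a < L / 9`, the winning set lies in `[L / 9, L / 3]`, which has mass `1 / 2`.

This bounds the payoff of a pure bid against `logMeas A E` (`payoff_eq_half`, `payoff_le_half`).
The game is constant-sum, `g2 E x y + g2 E y x = 1`, so the bounds for player 2 are those for
player 1 reflected. The equilibrium inequalities follow by integrating the pure-bid bounds, with
Fubini's theorem for the deviations of player 2.
-/

open MeasureTheory

/-- Reference price in the two-player Moroccan procurement game. -/
noncomputable def P2 (E x y : ℝ) : ℝ := (x + y + 2 * E) / 4

/-- Player 1's payoff in the two-player Moroccan procurement game. -/
noncomputable def g2 (E x y : ℝ) : ℝ :=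
  if (y < x ∧ x ≤ P2 E x y) ∨ (P2 E x y ≤ x ∧ x < y) ∨ (x ≤ P2 E x y ∧ P2 E x y < y) then 1
  else if x = y then 1 / 2
  else 0

/-- The logarithmic equilibrium density `f(t) = 1/(ln 9 · (E - t))` on `[A, A₂]`,
`0` elsewhere, where `A₂ = (A+8E)/9`. -/
noncomputable def logDens (A E : ℝ) (t : ℝ) : ℝ :=
  if t ∈ Set.Icc A ((A + 8 * E) / 9) then 1 / (Real.log 9 * (E - t)) else 0

/-- The measure on `ℝ` with Lebesgue density `logDens`. -/
noncomputable def logMeas (A E : ℝ) : Measure ℝ :=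
  volume.withDensity (fun t => ENNReal.ofReal (logDens A E t))

/-- Expected payoff of player 1 in the mixed extension. -/
noncomputable def Gmix (E : ℝ) (μ ν : Measure ℝ) : ℝ := ∫ x, ∫ y, g2 E x y ∂ν ∂μ

open Set

/-! ### The payoff function -/

lemma g2_nonneg (E x y : ℝ) : 0 ≤ g2 E x y := by
  unfold g2; split_ifs <;> norm_num

lemma g2_le_one (E x y : ℝ) : g2 E x y ≤ 1 := by
  unfold g2; split_ifs <;> norm_num

lemma g2_add_swap (E x y : ℝ) : g2 E x y + g2 E y x = 1 := by
  unfold g2 P2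
  split_ifs <;> first | (exfalso; grind) | norm_num

/-- The winning condition against a bid `y < E`, without the reference price. -/
lemma g2_eq_ite {E x y : ℝ} (hy : y < E) (hxy : y ≠ x) :
    g2 E x y = if (y < x ∧ 3 * x - 2 * E ≤ y) ∨ (x < E ∧ x + 2 * E < 3 * y) then 1 else 0 := by
  unfold g2 P2
  split_ifs <;> first | rfl | (exfalso; grind)

lemma measurable_g2 (E : ℝ) : Measurable (fun p : ℝ × ℝ => g2 E p.1 p.2) := by
  unfold g2 P2
  refine Measurable.ite ?_ measurable_const (Measurable.ite ?_ measurable_const measurable_const)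
  · have h1 : Measurable fun p : ℝ × ℝ => (p.1 + p.2 + 2 * E) / 4 := by fun_prop
    exact ((measurableSet_lt measurable_snd measurable_fst).inter
      (measurableSet_le measurable_fst h1)).union
      (((measurableSet_le h1 measurable_fst).inter
        (measurableSet_lt measurable_fst measurable_snd)).union
        ((measurableSet_le measurable_fst h1).inter (measurableSet_lt h1 measurable_snd)))
  · exact measurableSet_eq_fun measurable_fst measurable_snd

lemma integrable_g2_prod (E : ℝ) (μ ν : Measure ℝ) [IsProbabilityMeasure μ]
    [IsProbabilityMeasure ν] : Integrable (fun p : ℝ × ℝ => g2 E p.1 p.2) (μ.prod ν) :=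
  Integrable.of_bound (measurable_g2 E).aestronglyMeasurable 1
    (Filter.Eventually.of_forall fun p => by
      rw [Real.norm_of_nonneg (g2_nonneg _ _ _)]; exact g2_le_one _ _ _)

lemma integrable_g2_right (E x : ℝ) (μ : Measure ℝ) [IsProbabilityMeasure μ] :
    Integrable (fun y => g2 E x y) μ :=
  Integrable.of_bound ((measurable_g2 E).comp measurable_prodMk_left).aestronglyMeasurable 1
    (Filter.Eventually.of_forall fun p => by
      rw [Real.norm_of_nonneg (g2_nonneg _ _ _)]; exact g2_le_one _ _ _)

/-! ### The logarithmic measure -/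

lemma logDens_nonneg {A E : ℝ} (hAE : A < E) (t : ℝ) : 0 ≤ logDens A E t := by
  unfold logDens
  split_ifs with h
  · have : 0 < E - t := by linarith [h.2]
    have : 0 < Real.log 9 := Real.log_pos (by norm_num)
    positivity
  · exact le_rfl

lemma log_nine : Real.log 9 = 2 * Real.log 3 := by
  rw [show (9 : ℝ) = 3 ^ 2 by norm_num, Real.log_pow]; norm_num

lemma log_three_pos : 0 < Real.log 3 := Real.log_pos (by norm_num)

lemma continuousOn_dens {E p q : ℝ} (hq : q < E) :
    ContinuousOn (fun t => 1 / (Real.log 9 * (E - t))) (Icc p q) := by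
  refine ContinuousOn.div (by fun_prop) (by fun_prop) fun t ht => ?_
  have h1 : 0 < E - t := by linarith [ht.2]
  have h2 : 0 < Real.log 9 := Real.log_pos (by norm_num)
  positivity

lemma logDens_eqOn {A E p q : ℝ} (hp : A ≤ p) (hq : q ≤ (A + 8 * E) / 9) :
    EqOn (logDens A E) (fun t => 1 / (Real.log 9 * (E - t))) (Icc p q) := by
  intro t ht
  simp only [logDens]
  rw [if_pos ⟨hp.trans ht.1, ht.2.trans hq⟩]

lemma integrableOn_logDens {A E p q : ℝ} (hAE : A < E) (hp : A ≤ p)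
    (hq : q ≤ (A + 8 * E) / 9) : IntegrableOn (logDens A E) (Icc p q) :=
  (continuousOn_dens (by linarith)).integrableOn_Icc.congr_fun
    (logDens_eqOn hp hq).symm measurableSet_Icc

lemma setIntegral_logDens {A E p q : ℝ} (hAE : A < E) (hp : A ≤ p) (hpq : p ≤ q)
    (hq : q ≤ (A + 8 * E) / 9) :
    ∫ t in Ioc p q, logDens A E t = (Real.log (E - p) - Real.log (E - q)) / Real.log 9 := by
  have hqE : q < E := by linarith
  rw [setIntegral_congr_fun measurableSet_Ioc ((logDens_eqOn hp hq).mono Ioc_subset_Icc_self),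
    ← intervalIntegral.integral_of_le hpq,
    intervalIntegral.integral_eq_sub_of_hasDerivAt
      (f := fun t => -(Real.log (E - t) / Real.log 9))]
  · ring
  · intro t ht
    rw [uIcc_of_le hpq] at ht
    have h1 : E - t ≠ 0 := by linarith [ht.2]
    refine ((((hasDerivAt_id t).const_sub E).log h1).div_const (Real.log 9)).neg.congr_deriv ?_
    simp only [id]
    field_simp
  · exact ((uIcc_of_le hpq).symm ▸ continuousOn_dens hqE).intervalIntegrable

lemma logMeas_real_Ioc {A E p q : ℝ} (hAE : A < E) (hp : A ≤ p) (hpq : p ≤ q)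
    (hq : q ≤ (A + 8 * E) / 9) :
    (logMeas A E).real (Ioc p q) = (Real.log (E - p) - Real.log (E - q)) / Real.log 9 := by
  rw [← setIntegral_logDens hAE hp hpq hq, Measure.real, logMeas,
    withDensity_apply _ measurableSet_Ioc,
    ← ofReal_integral_eq_lintegral_ofReal
      ((integrableOn_logDens hAE hp hq).mono_set Ioc_subset_Icc_self)
      (Filter.Eventually.of_forall (logDens_nonneg hAE)),
    ENNReal.toReal_ofReal (integral_nonneg (logDens_nonneg hAE))]

lemma logMeas_compl (A E : ℝ) : logMeas A E (Icc A ((A + 8 * E) / 9))ᶜ = 0 := by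
  rw [logMeas, withDensity_apply _ measurableSet_Icc.compl]
  rw [setLIntegral_congr_fun (g := fun _ => 0) measurableSet_Icc.compl]
  · simp
  · intro t ht
    simp only [logDens]
    rw [if_neg ht, ENNReal.ofReal_zero]

lemma logMeas_singleton (A E x : ℝ) : logMeas A E {x} = 0 :=
  withDensity_absolutelyContinuous _ _ (by simp)

lemma ae_mem_Icc (A E : ℝ) : ∀ᵐ y ∂logMeas A E, y ∈ Icc A ((A + 8 * E) / 9) :=
  logMeas_compl A E

/-- Single bids are null: the lower end `A` of the support, ties `y = x`, and the bid
`y = 3 * x - 2 * E` for which `x` equals the reference price. -/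
lemma ae_good (A E x : ℝ) :
    ∀ᵐ y ∂logMeas A E, A < y ∧ y ≤ (A + 8 * E) / 9 ∧ y ≠ x ∧ y ≠ 3 * x - 2 * E := by
  have h (z : ℝ) : ∀ᵐ y ∂logMeas A E, y ≠ z := by
    rw [ae_iff]; simpa using logMeas_singleton A E z
  filter_upwards [ae_mem_Icc A E, h A, h x, h (3 * x - 2 * E)] with y h1 h2 h3 h4
  exact ⟨lt_of_le_of_ne h1.1 (Ne.symm h2), h1.2, h3, h4⟩

lemma logMeas_real_support {A E : ℝ} (hAE : A < E) :
    (logMeas A E).real (Ioc A ((A + 8 * E) / 9)) = 1 := by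
  rw [logMeas_real_Ioc hAE le_rfl (by linarith) le_rfl,
    show E - (A + 8 * E) / 9 = (E - A) / 9 by ring,
    Real.log_div (by linarith) (by norm_num)]
  have := log_three_pos
  rw [sub_sub_cancel, div_self (by rw [log_nine]; positivity)]

lemma isProbabilityMeasure_logMeas {A E : ℝ} (hAE : A < E) :
    IsProbabilityMeasure (logMeas A E) := by
  constructor
  rw [← measure_congr (s := Ioc A ((A + 8 * E) / 9))]
  · have := logMeas_real_support hAE
    rwa [Measure.real, ENNReal.toReal_eq_one_iff] at this
  · rw [Filter.eventuallyEq_univ]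
    filter_upwards [ae_good A E A] with y hy using ⟨hy.1, hy.2.1⟩

/-! ### Payoffs of pure bids against the logarithmic measure -/

lemma payoff_eq_half {A E x : ℝ} (hAE : A < E) (hx : x ∈ Icc A ((A + 8 * E) / 9)) :
    ∫ y, g2 E x y ∂logMeas A E = 1 / 2 := by
  have := isProbabilityMeasure_logMeas hAE
  have hl := log_three_pos
  obtain ⟨hx1, hx2⟩ := hx
  have hxE : 0 < E - x := by linarith
  rcases le_total (3 * (E - x)) (E - A) with h | h
  · -- up to a null set, the bids of the support beaten by `x` are those with `E - x < E - y ≤ 3 * (E - x)`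
    have key : (fun y => g2 E x y) =ᵐ[logMeas A E]
        (Ioc (3 * x - 2 * E) x).indicator (fun _ => (1 : ℝ)) := by
      filter_upwards [ae_good A E x] with y ⟨h1, h2, h3, h4⟩
      rw [g2_eq_ite (by linarith) h3]
      simp only [indicator_apply, mem_Ioc]
      split_ifs <;> first | rfl | (exfalso; grind)
    rw [integral_congr_ae key, integral_indicator_const _ measurableSet_Ioc,
      logMeas_real_Ioc hAE (by linarith) (by linarith) hx2,
      show E - (3 * x - 2 * E) = 3 * (E - x) by ring, Real.log_mul (by norm_num) hxE.ne',
      log_nine, smul_eq_mul]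
    field_simp
    ring
  · -- up to a null set, the bids of the support beaten by `x` are those below `x` together with those with `E - y < (E - x) / 3`
    have key : (fun y => g2 E x y) =ᵐ[logMeas A E] fun y =>
        (Ioc A x).indicator (fun _ => (1 : ℝ)) y +
        (Ioc ((x + 2 * E) / 3) ((A + 8 * E) / 9)).indicator (fun _ => (1 : ℝ)) y := by
      filter_upwards [ae_good A E x] with y ⟨h1, h2, h3, h4⟩
      rw [g2_eq_ite (by linarith) h3]
      simp only [indicator_apply, mem_Ioc]
      split_ifs <;> first | (exfalso; grind) | norm_num
    rw [integral_congr_ae key, integral_add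
      ((integrable_const _).indicator measurableSet_Ioc)
      ((integrable_const _).indicator measurableSet_Ioc),
      integral_indicator_const _ measurableSet_Ioc,
      integral_indicator_const _ measurableSet_Ioc,
      logMeas_real_Ioc hAE le_rfl hx1 hx2,
      logMeas_real_Ioc hAE (by linarith) (by linarith) le_rfl,
      show E - (x + 2 * E) / 3 = (E - x) / 3 by ring,
      show E - (A + 8 * E) / 9 = (E - A) / 9 by ring,
      Real.log_div hxE.ne' (by norm_num), Real.log_div (by linarith) (by norm_num),
      log_nine, smul_eq_mul, smul_eq_mul]
    field_simp
    ring

lemma payoff_le_half {A E x : ℝ} (hAE : A < E) (hx : A ≤ x) :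
    ∫ y, g2 E x y ∂logMeas A E ≤ 1 / 2 := by
  have := isProbabilityMeasure_logMeas hAE
  have hl := log_three_pos
  rcases le_or_gt x ((A + 8 * E) / 9) with h | h
  · exact (payoff_eq_half hAE ⟨hx, h⟩).le
  -- every bid of the support beaten by `x` satisfies `E - y ≤ 3 * (E - x) < (E - A) / 3`
  have key : (fun y => g2 E x y) ≤ᵐ[logMeas A E]
      (Ioc ((A + 2 * E) / 3) ((A + 8 * E) / 9)).indicator (fun _ => (1 : ℝ)) := by
    filter_upwards [ae_good A E x] with y ⟨h1, h2, h3, h4⟩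
    rw [g2_eq_ite (by linarith) h3]
    simp only [indicator_apply, mem_Ioc]
    split_ifs <;> first | (exfalso; grind) | norm_num
  refine (integral_mono_ae (integrable_g2_right E x _)
    ((integrable_const _).indicator measurableSet_Ioc) key).trans (le_of_eq ?_)
  rw [integral_indicator_const _ measurableSet_Ioc,
    logMeas_real_Ioc hAE (by linarith) (by linarith) le_rfl,
    show E - (A + 2 * E) / 3 = (E - A) / 3 by ring,
    show E - (A + 8 * E) / 9 = (E - A) / 9 by ring,
    Real.log_div (by linarith) (by norm_num), Real.log_div (by linarith) (by norm_num),
    log_nine, smul_eq_mul]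
  field_simp
  ring

lemma payoff_swap {A E : ℝ} (hAE : A < E) (y : ℝ) :
    ∫ x, g2 E x y ∂logMeas A E = 1 - ∫ x, g2 E y x ∂logMeas A E := by
  have := isProbabilityMeasure_logMeas hAE
  have key : (fun x => g2 E x y) = fun x => 1 - g2 E y x := by
    funext x
    linarith [g2_add_swap E x y]
  rw [key, integral_sub (integrable_const _) (integrable_g2_right E y _)]
  simp

/-! ### The equilibrium -/

lemma Gmix_self {A E : ℝ} (hAE : A < E) : Gmix E (logMeas A E) (logMeas A E) = 1 / 2 := by
  have := isProbabilityMeasure_logMeas hAE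
  have key : (fun x => ∫ y, g2 E x y ∂logMeas A E) =ᵐ[logMeas A E] fun _ => 1 / 2 := by
    filter_upwards [ae_mem_Icc A E] with x hx using payoff_eq_half hAE hx
  rw [Gmix, integral_congr_ae key]
  simp

lemma Gmix_le_half {A E : ℝ} (hAE : A < E) (μ : Measure ℝ) [IsProbabilityMeasure μ]
    (hμ : ∀ᵐ x ∂μ, A ≤ x) : Gmix E μ (logMeas A E) ≤ 1 / 2 := by
  have key : (fun x => ∫ y, g2 E x y ∂logMeas A E) ≤ᵐ[μ] fun _ => 1 / 2 := by
    filter_upwards [hμ] with x hx using payoff_le_half hAE hx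
  refine (integral_mono_of_nonneg (Filter.Eventually.of_forall fun x =>
    integral_nonneg fun y => g2_nonneg E x y) (integrable_const _) key).trans ?_
  simp

lemma half_le_Gmix {A E : ℝ} (hAE : A < E) (ν : Measure ℝ) [IsProbabilityMeasure ν]
    (hν : ∀ᵐ x ∂ν, A ≤ x) : 1 / 2 ≤ Gmix E (logMeas A E) ν := by
  have := isProbabilityMeasure_logMeas hAE
  have hint := integrable_g2_prod E (logMeas A E) ν
  rw [Gmix, integral_integral_swap hint]
  have key : (fun _ => (1 / 2 : ℝ)) ≤ᵐ[ν] fun y => ∫ x, g2 E x y ∂logMeas A E := by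
    filter_upwards [hν] with y hy
    rw [payoff_swap hAE]
    linarith [payoff_le_half hAE hy]
  refine le_trans ?_ (integral_mono_ae (integrable_const _) hint.integral_prod_right key)
  simp

/-- The density `f(t) = 1/(ln 9 · (E−t))` on `[A, A₂]` is a probability density, the
corresponding measure `μ_f` guarantees each player an expected payoff of exactly `1/2`
on `[A, A₂]` (and never worse elsewhere), and `(μ_f, μ_f)` is a symmetric mixed-strategy
Nash equilibrium of the two-player Moroccan procurement game with value `1/2`. -/
theorem log_density_symmetric_equilibrium (A E B : ℝ) (hAE : A < E) (hEB : E < B)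
    (A₂ : ℝ) (hA₂ : A₂ = (A + 8 * E) / 9) :
    (∀ t, 0 ≤ logDens A E t) ∧
    (∫ t in Set.Icc A A₂, logDens A E t = 1) ∧
    (∀ x ∈ Set.Icc A B, ∫ y, g2 E x y ∂(logMeas A E) ≤ 1 / 2) ∧
    (∀ x ∈ Set.Icc A A₂, ∫ y, g2 E x y ∂(logMeas A E) = 1 / 2) ∧
    (∀ y ∈ Set.Icc A B, 1 / 2 ≤ ∫ x, g2 E x y ∂(logMeas A E)) ∧
    (∀ y ∈ Set.Icc A A₂, ∫ x, g2 E x y ∂(logMeas A E) = 1 / 2) ∧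
    (∀ μ : Measure ℝ, IsProbabilityMeasure μ → μ (Set.Icc A B)ᶜ = 0 →
      Gmix E μ (logMeas A E) ≤ Gmix E (logMeas A E) (logMeas A E)) ∧
    (∀ ν : Measure ℝ, IsProbabilityMeasure ν → ν (Set.Icc A B)ᶜ = 0 →
      Gmix E (logMeas A E) (logMeas A E) ≤ Gmix E (logMeas A E) ν) ∧
    Gmix E (logMeas A E) (logMeas A E) = 1 / 2 := by
  subst hA₂
  have hsupp : ∀ {μ : Measure ℝ}, μ (Set.Icc A B)ᶜ = 0 → ∀ᵐ x ∂μ, A ≤ x := fun {μ} h => by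
    have h' : ∀ᵐ x ∂μ, x ∈ Set.Icc A B := h
    filter_upwards [h'] with x hx using hx.1
  refine ⟨logDens_nonneg hAE, ?_, fun x hx => payoff_le_half hAE hx.1,
    fun x hx => payoff_eq_half hAE hx, fun y hy => ?_, fun y hy => ?_, fun μ _ hμ => ?_,
    fun ν _ hν => ?_, Gmix_self hAE⟩
  · rw [integral_Icc_eq_integral_Ioc, setIntegral_logDens hAE le_rfl (by linarith) le_rfl,
      ← logMeas_real_Ioc hAE le_rfl (by linarith) le_rfl, logMeas_real_support hAE]
  · rw [payoff_swap hAE]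
    linarith [payoff_le_half hAE hy.1]
  · rw [payoff_swap hAE, payoff_eq_half hAE hy]
    norm_num
  · rw [Gmix_self hAE]
    exact Gmix_le_half hAE μ (hsupp hμ)
  · rw [Gmix_self hAE]
    exact half_le_Gmix hAE ν (hsupp hν)
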